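/- Let G=(V,E) be an oriented 3-edge-connected graph with ℓ = |E| − |V|, and let Γ be an abelian group with |Γ| = k ≥ 6. For every function f: E → Γ, the number of Γ-flows φ: E → Γ satisfying φ(e) ≠ f(e) for every e ∈ E is at least (1/2)·((k−6)/2)^ℓ if k is odd, and at least (1/2)·((k−4)/2)^ℓ if k is even. -/

import Mathlib

open scoped Classical

/-- A multigraph with an orientation: each edge `e` has a source `src e` and a target `tgt e`.
Loops and parallel edges are allowed. -/
structure Multigraph (V E : Type) where
  src : E → V
  tgt : E → V

namespace Multigraph

variable {V E : Type}

/-- `u` and `v` are joined by some edge satisfying the predicate `P`. -/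
def adjVia (G : Multigraph V E) (P : E → Prop) (u v : V) : Prop :=
  ∃ e, P e ∧ ((G.src e = u ∧ G.tgt e = v) ∨ (G.src e = v ∧ G.tgt e = u))

/-- `v` is reachable from `u` using only edges satisfying `P`. -/
def Reaches (G : Multigraph V E) (P : E → Prop) : V → V → Prop :=
  Relation.ReflTransGen (G.adjVia P)

/-- The graph is connected when only edges satisfying `P` are kept (all edges deleted
whose predicate fails, all vertices kept). -/
def ConnectedVia (G : Multigraph V E) (P : E → Prop) : Prop :=
  Nonempty V ∧ ∀ u v : V, G.Reaches P u v

def Connected (G : Multigraph V E) : Prop :=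
  G.ConnectedVia fun _ => True

/-- `G` is `k`-edge-connected: it is connected and has no edge cut of size less than `k`;
equivalently, deleting any set of fewer than `k` edges leaves it connected. -/
def EdgeConnected (G : Multigraph V E) (k : ℕ) : Prop :=
  ∀ S : Set E, S.ncard < k → G.ConnectedVia fun e => e ∉ S

/-- The degree of a vertex (loops counted twice). -/
noncomputable def degree (G : Multigraph V E) (v : V) : ℕ :=
  {e | G.src e = v}.ncard + {e | G.tgt e = v}.ncard

/-- Every vertex has degree exactly 3. -/
def Cubic (G : Multigraph V E) : Prop :=
  ∀ v : V, G.degree v = 3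

/-- `φ : E → Γ` is a flow: at every vertex, the sum over outgoing edges equals the
sum over incoming edges. -/
def IsFlow [Fintype E] {Γ : Type} [AddCommGroup Γ] (G : Multigraph V E) (φ : E → Γ) : Prop :=
  ∀ v : V, (∑ e : E, if G.src e = v then φ e else 0) = ∑ e : E, if G.tgt e = v then φ e else 0

/-- The vertex `v` is an endpoint of some edge of `C`. -/
def touches (G : Multigraph V E) (C : Set E) (v : V) : Prop :=
  ∃ e ∈ C, G.src e = v ∨ G.tgt e = v

/-- An edge set `C` is (the edge set of) a cycle: it is nonempty, every vertex it touches
has degree exactly 2 in it, and it is connected. -/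
def IsCycle (G : Multigraph V E) (C : Set E) : Prop :=
  C.Nonempty ∧
  (∀ v : V, G.touches C v →
    ({e ∈ C | G.src e = v}.ncard + {e ∈ C | G.tgt e = v}.ncard = 2)) ∧
  (∀ u v : V, G.touches C u → G.touches C v → G.Reaches (· ∈ C) u v)

/-- `R` is `k`-closed: every cycle with at least one edge outside `R` has at least
`k+1` edges outside `R`. -/
def Closed (G : Multigraph V E) (k : ℕ) (R : Set E) : Prop :=
  ∀ C : Set E, G.IsCycle C → (C \ R).Nonempty → k + 1 ≤ (C \ R).ncard

/-- The `k`-closure `⟨S⟩ₖ` of `S` : the minimal `k`-closed set containing `S`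
(the family of `k`-closed sets is closed under intersections). -/
def kClosure (G : Multigraph V E) (k : ℕ) (S : Set E) : Set E :=
  ⋂₀ {R : Set E | S ⊆ R ∧ G.Closed k R}

/-- `S` is a `k`-base: its `k`-closure is the whole edge set. -/
def IsBase (G : Multigraph V E) (k : ℕ) (S : Set E) : Prop :=
  G.kClosure k S = Set.univ

/-- An edge set `S` is peripheral if `G − S` is connected. -/
def Peripheral (G : Multigraph V E) (S : Set E) : Prop :=
  G.ConnectedVia fun e => e ∉ S

/-- The spanning subgraph `(V, F)` is a forest, i.e. contains no cycle. -/
def IsForest (G : Multigraph V E) (F : Set E) : Prop :=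
  ∀ C : Set E, G.IsCycle C → ¬ C ⊆ F

/-- `vs`, `es` describe a path: distinct vertices `vs 0, …, vs n` and distinct edges
`es 0, …, es (n-1)` where `es i` joins `vs i` and `vs (i+1)`. -/
def IsPath (G : Multigraph V E) {n : ℕ} (vs : Fin (n + 1) → V) (es : Fin n → E) : Prop :=
  Function.Injective vs ∧ Function.Injective es ∧
  ∀ i : Fin n,
    (G.src (es i) = vs i.castSucc ∧ G.tgt (es i) = vs i.succ) ∨
    (G.src (es i) = vs i.succ ∧ G.tgt (es i) = vs i.castSucc)

/-- The edge `e` has `y` as one endpoint and its other endpoint in `X`,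
i.e. `e ∈ E(y, X)`. -/
def joins (G : Multigraph V E) (e : E) (y : V) (X : Set V) : Prop :=
  (G.src e = y ∧ G.tgt e ∈ X) ∨ (G.tgt e = y ∧ G.src e ∈ X)

/-- `W` is the vertex set of a connected component of `G − X`. -/
def IsComponent (G : Multigraph V E) (X W : Set V) : Prop :=
  W.Nonempty ∧ Disjoint W X ∧
  (∀ u ∈ W, ∀ v : V, v ∉ X → G.adjVia (fun _ => True) u v → v ∈ W) ∧
  (∀ u ∈ W, ∀ v ∈ W, G.Reaches (fun e => G.src e ∉ X ∧ G.tgt e ∉ X) u v)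

/-- The subgraph induced on `W`, with only those of its edges satisfying `P` kept,
is connected. -/
def ConnectedOn (G : Multigraph V E) (W : Set V) (P : E → Prop) : Prop :=
  ∀ u ∈ W, ∀ v ∈ W, G.Reaches (fun e => P e ∧ G.src e ∈ W ∧ G.tgt e ∈ W) u v

/-- The subgraph induced on `W` is `k`-edge-connected. -/
def EdgeConnectedOn (G : Multigraph V E) (W : Set V) (k : ℕ) : Prop :=
  ∀ S : Set E, S.ncard < k → G.ConnectedOn W fun e => e ∉ S

/-- Some cycle lies entirely inside the vertex set `X`. -/
def HasCycleIn (G : Multigraph V E) (X : Set V) : Prop :=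
  ∃ C : Set E, G.IsCycle C ∧ ∀ e ∈ C, G.src e ∈ X ∧ G.tgt e ∈ X

/-- The edge cut `E(X, V \ X)`. -/
def cutEdges (G : Multigraph V E) (X : Set V) : Set E :=
  {e | (G.src e ∈ X ∧ G.tgt e ∉ X) ∨ (G.src e ∉ X ∧ G.tgt e ∈ X)}

/-- A cubic graph is cyclically `k`-edge-connected if every edge cut separating two
cycle-containing parts has at least `k` edges. -/
def CyclicallyEdgeConnected (G : Multigraph V E) (k : ℕ) : Prop :=
  ∀ X : Set V, G.HasCycleIn X → G.HasCycleIn Xᶜ → k ≤ (G.cutEdges X).ncard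

/-- `G` is 3-connected: more than 3 vertices, connected, and still connected after
deleting any two vertices. -/
def ThreeConnected [Fintype V] (G : Multigraph V E) : Prop :=
  3 < Fintype.card V ∧ G.Connected ∧
    ∀ u v : V, G.ConnectedOn {w : V | w ≠ u ∧ w ≠ v} fun _ => True

/-- The graph `G − r` obtained by deleting the vertex `r` and all incident edges. -/
def deleteVertex (G : Multigraph V E) (r : V) :
    Multigraph {v : V // v ≠ r} {e : E // G.src e ≠ r ∧ G.tgt e ≠ r} where
  src e := ⟨G.src e.1, e.2.1⟩
  tgt e := ⟨G.tgt e.1, e.2.2⟩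

end Multigraph

/-!
Call `S` a `2`-base if all edges can be reached from `S` by repeatedly adding a cycle with at most
two new edges. Shifting a flow by a multiple `a` of such a cycle spoils at most `2 * q` of the
`n = |Γ|` values of `a`, if every edge has at most `q` forbidden values. Hence a proportion of at
least `1 - 2 * q / n` of the flows survives each step, and at least `(n - 2 * q) ^ (|E| - |V| + 1)`
flows avoid the forbidden values outside `S`. Take `{f e, f e + c, f e - c}` as forbidden values,
where `c ≠ 0`; then `q = 3`, or `q = 2` if `c` has order two. If moreover the complement of `S` is
connected, then any choice of coordinates on `S` extends to a flow modulo two, which lifts to an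
integer flow with values in `{-1, 0, 1}`. Adding `c` times a suitable lift repairs the edges of `S`
with `φ e = f e` and harms no other edge. As there are `2 ^ (|E| - |V| + 1)` flows modulo two, each
repaired flow arises at most that often.

To find such an `S` in a 3-edge-connected graph, add ears to a single vertex. Outside the part `U`
already built, take a minimal end `L`, which at most one edge joins to the rest of the complement.
A connected set of edges of `L` that leaves some path between two neighbours of `U` in `L` can be
enlarged until it spans `L`: a part of `L` that it misses has at least two edges leaving it, and at
least three if it contains no neighbour of `U`, too many for all of them to be bridges of the path.
-/

namespace Multigraph

section Reachability

variable {V E : Type} {G : Multigraph V E} {P Q : E → Prop} {X : Set V} {u v w : V} {e : E}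

/-- The edge `e` has ends `u` and `v`, in either direction. -/
def IsLink (G : Multigraph V E) (e : E) (u v : V) : Prop :=
  (G.src e = u ∧ G.tgt e = v) ∨ (G.src e = v ∧ G.tgt e = u)

theorem isLink_src_tgt (G : Multigraph V E) (e : E) : G.IsLink e (G.src e) (G.tgt e) :=
  Or.inl ⟨rfl, rfl⟩

theorem IsLink.symm (h : G.IsLink e u v) : G.IsLink e v u :=
  Or.symm h

theorem IsLink.forall_ends_iff (h : G.IsLink e u v) (p : V → Prop) :
    p (G.src e) ∧ p (G.tgt e) ↔ p u ∧ p v := by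
  rcases h with ⟨rfl, rfl⟩ | ⟨rfl, rfl⟩
  exacts [Iff.rfl, and_comm]

theorem IsLink.exists_ends_iff (h : G.IsLink e u v) (p : V → Prop) :
    p (G.src e) ∨ p (G.tgt e) ↔ p u ∨ p v := by
  rcases h with ⟨rfl, rfl⟩ | ⟨rfl, rfl⟩
  exacts [Iff.rfl, or_comm]

theorem IsLink.reaches (h : G.IsLink e u v) (he : P e) : G.Reaches P u v :=
  Relation.ReflTransGen.single ⟨e, he, h⟩

theorem Reaches.refl (u : V) : G.Reaches P u u :=
  Relation.ReflTransGen.refl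

theorem Reaches.trans (h : G.Reaches P u v) (h' : G.Reaches P v w) : G.Reaches P u w :=
  Relation.ReflTransGen.trans h h'

theorem Reaches.of_forall_reaches (h : G.Reaches P u v)
    (hPQ : ∀ e x y, P e → G.IsLink e x y → G.Reaches Q x y) : G.Reaches Q u v := by
  induction h with
  | refl => exact Reaches.refl _
  | tail _ hlink ih =>
    obtain ⟨e, he, hlink⟩ := hlink
    exact ih.trans (hPQ e _ _ he hlink)

theorem Reaches.of_forall_ends {p : V → Prop} (h : G.Reaches P u v)
    (hP : ∀ e, P e → p (G.src e) ∧ p (G.tgt e)) (hu : p u) : p v := by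
  cases h with
  | refl => exact hu
  | tail _ hlink =>
    obtain ⟨e, he, hlink⟩ := hlink
    exact ((IsLink.forall_ends_iff hlink p).mp (hP e he)).2

theorem Reaches.mono (h : G.Reaches P u v) (hPQ : ∀ e, P e → Q e) : G.Reaches Q u v :=
  h.of_forall_reaches fun e _ _ he hlink => hlink.reaches (hPQ e he)

theorem Reaches.symm (h : G.Reaches P u v) : G.Reaches P v u := by
  induction h with
  | refl => exact Reaches.refl _
  | tail _ hlink ih =>
    obtain ⟨e, he, hlink⟩ := hlink
    exact (IsLink.reaches (IsLink.symm hlink) he).trans ih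

theorem IsLink.reaches_ends_iff (h : G.IsLink e u v) :
    G.Reaches P (G.src e) (G.tgt e) ↔ G.Reaches P u v := by
  rcases h with ⟨rfl, rfl⟩ | ⟨rfl, rfl⟩
  exacts [Iff.rfl, ⟨Reaches.symm, Reaches.symm⟩]

theorem IsLink.reaches_iff (h : G.IsLink e u v) (he : P e) : G.Reaches P w u ↔ G.Reaches P w v :=
  ⟨fun hu => hu.trans (h.reaches he), fun hv => hv.trans (h.symm.reaches he)⟩

theorem Reaches.and_reaches_src (h : G.Reaches P u v) :
    G.Reaches (fun e => P e ∧ G.Reaches P u (G.src e)) u v := by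
  induction h with
  | refl => exact Reaches.refl _
  | @tail b c hub hlink ih =>
    obtain ⟨e, he, hlink⟩ := hlink
    refine ih.trans (IsLink.reaches hlink ⟨he, ?_⟩)
    have huc : G.Reaches P u c := (IsLink.reaches_iff hlink he).mp hub
    exact ((IsLink.forall_ends_iff hlink (G.Reaches P u)).mpr ⟨hub, huc⟩).1

theorem Reaches.exists_mem_cutEdges (h : G.Reaches P u v) (hu : u ∈ X) (hv : v ∉ X) :
    ∃ e ∈ G.cutEdges X, P e := by
  by_contra! hcut
  refine hv ?_
  clear hv
  induction h with
  | refl => exact hu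
  | tail _ hlink ih =>
    obtain ⟨e, he, ⟨rfl, rfl⟩ | ⟨rfl, rfl⟩⟩ := hlink
    · exact by_contra fun hx => hcut e (Or.inl ⟨ih, hx⟩) he
    · exact by_contra fun hx => hcut e (Or.inr ⟨hx, ih⟩) he

theorem ConnectedVia.mono (h : G.ConnectedVia P) (hPQ : ∀ e, P e → Q e) : G.ConnectedVia Q :=
  ⟨h.1, fun u v => (h.2 u v).mono hPQ⟩

theorem Peripheral.connected {S : Set E} (hS : G.Peripheral S) : G.Connected :=
  ConnectedVia.mono hS fun _ _ => trivial

end Reachability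

section Cycles

variable {V E : Type} {G : Multigraph V E} {P : E → Prop} {C D : Set E} {u v w x : V} {e : E}

/-- `D` is the edge set of a path from `u` to `v`, built edge by edge from its end `v`. Compared
with `Multigraph.IsPath`, the orders of the vertices and of the edges are forgotten. -/
inductive IsPathSet (G : Multigraph V E) : V → V → Set E → Prop
  | nil (u : V) : IsPathSet G u u ∅
  | cons {u w v : V} {e : E} {D : Set E} (hlink : G.IsLink e u w) (hD : IsPathSet G w v D)
      (huv : u ≠ v) (hu : ¬ G.touches D u) : IsPathSet G u v (insert e D)

theorem touches_insert_iff (h : G.IsLink e u v) :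
    G.touches (insert e D) x ↔ (u = x ∨ v = x) ∨ G.touches D x := by
  simp only [touches, Set.exists_mem_insert, h.exists_ends_iff (· = x)]

theorem notMem_of_not_touches (h : G.IsLink e u v) (hu : ¬ G.touches D u) : e ∉ D :=
  fun he => hu ⟨e, he, (h.exists_ends_iff (· = u)).mpr (Or.inl rfl)⟩

theorem IsPathSet.touches_left (h : G.IsPathSet u v D) (huv : u ≠ v) : G.touches D u := by
  cases h with
  | nil => exact absurd rfl huv
  | cons hlink _ _ _ => exact (touches_insert_iff hlink).mpr (Or.inl (Or.inl rfl))

theorem IsPathSet.exists_subset_of_touches (h : G.IsPathSet w v D)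
    (hu : G.touches D u ∨ u = v) : ∃ D' ⊆ D, G.IsPathSet u v D' := by
  induction h with
  | nil =>
    rcases hu with ⟨_, he, _⟩ | rfl
    exacts [absurd he (Set.notMem_empty _), ⟨∅, subset_rfl, .nil _⟩]
  | @cons a b c e D hlink hD hne ha ih =>
    rw [touches_insert_iff hlink] at hu
    rcases hu with ((rfl | rfl) | hu) | hu
    · exact ⟨_, subset_rfl, .cons hlink hD hne ha⟩
    · exact ⟨D, Set.subset_insert _ _, hD⟩
    · obtain ⟨D', hD', hpath⟩ := ih (Or.inl hu)
      exact ⟨D', hD'.trans (Set.subset_insert _ _), hpath⟩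
    · obtain ⟨D', hD', hpath⟩ := ih (Or.inr hu)
      exact ⟨D', hD'.trans (Set.subset_insert _ _), hpath⟩

theorem Reaches.exists_isPathSet (h : G.Reaches P u v) :
    ∃ D, G.IsPathSet u v D ∧ ∀ e ∈ D, P e := by
  induction h using Relation.ReflTransGen.head_induction_on with
  | refl => exact ⟨∅, .nil _, fun _ he => absurd he (Set.notMem_empty _)⟩
  | @head a b hlink _ ih =>
    obtain ⟨e, he, hlink⟩ := hlink
    obtain ⟨D, hD, hDP⟩ := ih
    by_cases ha : G.touches D a ∨ a = v
    · obtain ⟨D', hD', hpath⟩ := hD.exists_subset_of_touches ha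
      exact ⟨D', hpath, fun e' he' => hDP e' (hD' he')⟩
    · push Not at ha
      exact ⟨insert e D, .cons hlink hD ha.2 ha.1, Set.forall_mem_insert.mpr ⟨he, hDP⟩⟩

theorem IsPathSet.reaches_of_touches (h : G.IsPathSet u v D) (hx : G.touches D x) :
    G.Reaches (· ∈ D) u x := by
  induction h with
  | nil => exact absurd hx.choose_spec.1 (Set.notMem_empty _)
  | @cons a b _ e D hlink _ _ _ ih =>
    have hab : G.Reaches (· ∈ insert e D) a b := hlink.reaches (Set.mem_insert e D)
    rcases (touches_insert_iff hlink).mp hx with (rfl | rfl) | hx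
    exacts [Reaches.refl _, hab, hab.trans ((ih hx).mono fun _ => Set.mem_insert_of_mem e)]

/-- The degree of `x` in the spanning subgraph with edge set `D`; loops count twice. -/
noncomputable def degreeIn (G : Multigraph V E) (D : Set E) (x : V) : ℕ :=
  {e ∈ D | G.src e = x}.ncard + {e ∈ D | G.tgt e = x}.ncard

variable [Finite E]

theorem degreeIn_eq_zero_iff : G.degreeIn D x = 0 ↔ ¬ G.touches D x := by
  simp only [degreeIn, Nat.add_eq_zero_iff, Set.ncard_eq_zero (Set.toFinite _),
    Set.eq_empty_iff_forall_notMem, Set.mem_ofPred_eq, touches]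
  grind

theorem degreeIn_insert (he : e ∉ D) (h : G.IsLink e u v) :
    G.degreeIn (insert e D) x =
      G.degreeIn D x + ((if u = x then 1 else 0) + (if v = x then 1 else 0)) := by
  have hend : ∀ r : E → V, {g ∈ insert e D | r g = x}.ncard =
      {g ∈ D | r g = x}.ncard + if r e = x then 1 else 0 := by
    intro r
    split_ifs with hr
    · rw [← Set.ncard_insert_of_notMem (fun h => he h.1) (Set.toFinite _)]
      congr 1
      grind
    · congr 1
      grind
  rw [degreeIn, degreeIn, hend, hend]
  rcases h with ⟨rfl, rfl⟩ | ⟨rfl, rfl⟩ <;> omega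

theorem IsPathSet.degreeIn_add (h : G.IsPathSet u v D) (x : V) :
    G.degreeIn D x + ((if u = x then 1 else 0) + (if v = x then 1 else 0)) = 0 ∨
      G.degreeIn D x + ((if u = x then 1 else 0) + (if v = x then 1 else 0)) = 2 := by
  induction h with
  | nil u => by_cases hx : u = x <;> simp [degreeIn, hx]
  | @cons a b c e D hlink hD hne ha ih =>
    rw [degreeIn_insert (notMem_of_not_touches hlink ha) hlink]
    by_cases hax : a = x
    · subst hax
      have hba : b ≠ a := by
        rintro rfl
        exact ha (hD.touches_left hne)
      simp [degreeIn_eq_zero_iff.mpr ha, hba, hne.symm]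
    · simpa [hax, add_assoc] using ih

theorem IsPathSet.isCycle_insert (h : G.IsPathSet u v D) (he : G.IsLink e u v) (heD : e ∉ D) :
    G.IsCycle (insert e D) := by
  have hreach : ∀ x, G.touches (insert e D) x → G.Reaches (· ∈ insert e D) u x := by
    intro x hx
    rcases (touches_insert_iff he).mp hx with (rfl | rfl) | hx
    exacts [Reaches.refl _, he.reaches (Set.mem_insert e D),
      (h.reaches_of_touches hx).mono fun _ => Set.mem_insert_of_mem e]
  refine ⟨Set.insert_nonempty e D, fun x hx => ?_,
    fun x y hx hy => (hreach x hx).symm.trans (hreach y hy)⟩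
  have hdeg : G.degreeIn (insert e D) x = 0 ∨ G.degreeIn (insert e D) x = 2 := by
    rw [degreeIn_insert heD he]
    exact h.degreeIn_add x
  exact hdeg.resolve_left fun h0 => degreeIn_eq_zero_iff.mp h0 hx

theorem exists_isCycle_of_reaches (he : ¬ P e) (h : G.Reaches P (G.src e) (G.tgt e)) :
    ∃ C, G.IsCycle C ∧ e ∈ C ∧ ∀ g ∈ C, g = e ∨ P g := by
  obtain ⟨D, hD, hDP⟩ := h.exists_isPathSet
  refine ⟨insert e D, hD.isCycle_insert (G.isLink_src_tgt e) fun heD => he (hDP e heD),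
    Set.mem_insert e D, fun g hg => hg.imp_right (hDP g)⟩

theorem IsCycle.even_degreeIn (hC : G.IsCycle C) (x : V) : Even (G.degreeIn C x) := by
  by_cases hx : G.touches C x
  · exact ⟨1, hC.2.1 x hx⟩
  · simp [degreeIn_eq_zero_iff.mpr hx]

end Cycles

section Boundary

variable {V E : Type} [Fintype E] {A : Type} [AddCommGroup A]

/-- The boundary homomorphism: the outgoing minus the incoming sum at each vertex. Its kernel
consists of the flows. -/
noncomputable def boundary (G : Multigraph V E) : (E → A) →+ (V → A) :=
  ∑ e, (AddMonoidHom.single (fun _ => A) (G.src e) -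
    AddMonoidHom.single (fun _ => A) (G.tgt e)).comp (Pi.evalAddMonoidHom (fun _ => A) e)

variable {G : Multigraph V E} {φ ψ : E → A} {e : E} {u v : V}

theorem boundary_eq_sum (φ : E → A) : G.boundary φ =
    ∑ e, (Pi.single (G.src e) (φ e) - Pi.single (G.tgt e) (φ e)) := by
  simp [boundary]

theorem isFlow_iff_boundary_eq_zero : G.IsFlow φ ↔ G.boundary φ = 0 := by
  simp only [IsFlow, funext_iff, boundary_eq_sum, Finset.sum_apply, Pi.single_apply,
    Finset.sum_sub_distrib, sub_eq_zero, eq_comm (b := G.src _), eq_comm (b := G.tgt _)]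

theorem boundary_single (e : E) (a : A) :
    G.boundary (Pi.single e a) = Pi.single (G.src e) a - Pi.single (G.tgt e) a := by
  rw [boundary_eq_sum, Finset.sum_eq_single e]
  · simp
  · intro g _ hg
    simp [hg]
  · simp

theorem boundary_smul_const (p : E → ℤ) (a : A) :
    G.boundary (fun e => p e • a) = fun v => G.boundary p v • a := by
  ext v
  simp only [boundary_eq_sum, Finset.sum_apply, Pi.sub_apply, Pi.single_apply, Finset.sum_smul,
    sub_smul, ite_smul, zero_smul]

theorem IsFlow.zero : G.IsFlow (0 : E → A) :=
  isFlow_iff_boundary_eq_zero.mpr (map_zero _)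

theorem IsFlow.add (hφ : G.IsFlow φ) (hψ : G.IsFlow ψ) : G.IsFlow (φ + ψ) := by
  rw [isFlow_iff_boundary_eq_zero] at *
  rw [map_add, hφ, hψ, add_zero]

theorem IsFlow.sub (hφ : G.IsFlow φ) (hψ : G.IsFlow ψ) : G.IsFlow (φ - ψ) := by
  rw [isFlow_iff_boundary_eq_zero] at *
  rw [map_sub, hφ, hψ, sub_zero]

theorem IsFlow.smul_const {p : E → ℤ} (hp : G.IsFlow p) (a : A) :
    G.IsFlow fun e => p e • a := by
  rw [isFlow_iff_boundary_eq_zero] at *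
  rw [boundary_smul_const, hp]
  exact funext fun _ => zero_smul ℤ a

theorem sum_mem_boundary (X : Finset V) (φ : E → A) :
    ∑ v ∈ X, G.boundary φ v =
      ∑ e, ((if G.src e ∈ X then φ e else 0) - if G.tgt e ∈ X then φ e else 0) := by
  simp only [boundary_eq_sum, Finset.sum_apply, Pi.sub_apply, Pi.single_apply]
  rw [Finset.sum_comm]
  refine Finset.sum_congr rfl fun e _ => ?_
  rw [Finset.sum_sub_distrib]
  simp

theorem sum_boundary [Fintype V] (φ : E → A) : ∑ v, G.boundary φ v = 0 := by
  simpa using sum_mem_boundary (G := G) Finset.univ φ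

theorem IsLink.exists_boundary_single_eq (h : G.IsLink e u v) :
    ∃ s : ℤ, |s| = 1 ∧ G.boundary (Pi.single e s) = Pi.single u 1 - Pi.single v 1 := by
  rcases h with ⟨rfl, rfl⟩ | ⟨rfl, rfl⟩
  · exact ⟨1, by simp, boundary_single e 1⟩
  · exact ⟨-1, by simp, by rw [boundary_single, Pi.single_neg, Pi.single_neg]; abel⟩

theorem IsPathSet.exists_orientation {D : Set E} (h : G.IsPathSet u v D) :
    ∃ p : E → ℤ, (∀ e, |p e| ≤ 1) ∧ (∀ e ∉ D, p e = 0) ∧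
      G.boundary p = Pi.single u 1 - Pi.single v 1 := by
  induction h with
  | nil => exact ⟨0, by simp, by simp, by simp⟩
  | @cons a b c e D hlink _ _ ha ih =>
    obtain ⟨p, hp, hpD, hpb⟩ := ih
    obtain ⟨s, hs, hsb⟩ := hlink.exists_boundary_single_eq
    have hpe : p e = 0 := hpD e (notMem_of_not_touches hlink ha)
    refine ⟨p + Pi.single e s, fun g => ?_, fun g hg => ?_, by rw [map_add, hpb, hsb]; abel⟩
    · obtain rfl | hge := eq_or_ne g e
      · simp [hpe, hs]
      · simpa [hge] using hp g
    · rw [Set.mem_insert_iff, not_or] at hg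
      simp [hpD g hg.2, hg.1]

theorem exists_signed_cycle_of_reaches {P : E → Prop} (he : ¬ P e)
    (h : G.Reaches P (G.src e) (G.tgt e)) :
    ∃ g : E → ℤ, G.IsFlow g ∧ (∀ e', |g e'| ≤ 1) ∧ g e = 1 ∧ ∀ e' ≠ e, g e' ≠ 0 → P e' := by
  obtain ⟨D, hD, hDP⟩ := h.symm.exists_isPathSet
  obtain ⟨p, hp, hpD, hpb⟩ := hD.exists_orientation
  have hpe : p e = 0 := hpD e fun heD => he (hDP e heD)
  refine ⟨p + Pi.single e 1, isFlow_iff_boundary_eq_zero.mpr ?_, fun e' => ?_, by simp [hpe],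
    fun e' hne hpe' => hDP e' (by_contra fun hD => hpe' ?_)⟩
  · rw [map_add, hpb, boundary_single]
    abel
  · obtain rfl | hne := eq_or_ne e' e
    · simp [hpe]
    · simpa [hne] using hp e'
  · simp [hne, hpD e' hD]

-- Otherwise the edge would carry the whole net flow out of the set reached from its source.
theorem IsFlow.reaches_of_ne_zero (hφ : G.IsFlow φ) (he : φ e ≠ 0) :
    G.Reaches (fun g => φ g ≠ 0 ∧ g ≠ e) (G.src e) (G.tgt e) := by
  by_contra hnot
  let X : Finset V := {v ∈ Finset.univ.image G.src ∪ Finset.univ.image G.tgt |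
    G.Reaches (fun g => φ g ≠ 0 ∧ g ≠ e) (G.src e) v}
  have hsrc : ∀ g, G.src g ∈ X ↔ G.Reaches (fun g => φ g ≠ 0 ∧ g ≠ e) (G.src e) (G.src g) := by
    simp [X]
  have htgt : ∀ g, G.tgt g ∈ X ↔ G.Reaches (fun g => φ g ≠ 0 ∧ g ≠ e) (G.src e) (G.tgt g) := by
    simp [X]
  have hsum := sum_mem_boundary (G := G) X φ
  rw [isFlow_iff_boundary_eq_zero.mp hφ, Finset.sum_eq_single e] at hsum
  · rw [if_pos ((hsrc e).mpr (Reaches.refl _)), if_neg ((htgt e).not.mpr hnot), sub_zero] at hsum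
    exact he (hsum.symm.trans (by simp))
  · intro g _ hge
    by_cases hg : φ g = 0
    · simp [hg]
    · have hreach := (G.isLink_src_tgt g).reaches (P := fun g => φ g ≠ 0 ∧ g ≠ e) ⟨hg, hge⟩
      have hX : G.src g ∈ X ↔ G.tgt g ∈ X := by
        rw [hsrc, htgt]
        exact ⟨fun h => h.trans hreach, fun h => h.trans hreach.symm⟩
      simp [hX]
  · simp

theorem intCast_zmod_two_eq_one {n : ℤ} (hn : |n| ≤ 1) (h0 : n ≠ 0) : (n : ZMod 2) = 1 := by
  rcases Int.abs_le_one_iff.mp hn with rfl | rfl | rfl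
  exacts [absurd rfl h0, rfl, rfl]

theorem IsFlow.ite_support_zmod_two {ψ : E → ZMod 2} (hψ : G.IsFlow ψ) {g : E → ℤ}
    (hg : G.IsFlow g) (hg1 : ∀ e, |g e| ≤ 1) (hgψ : ∀ e, g e ≠ 0 → ψ e ≠ 0) :
    G.IsFlow fun e => if g e = 0 then ψ e else 0 := by
  convert hψ.sub (hg.smul_const (1 : ZMod 2)) using 1
  ext e
  split_ifs with h
  · simp [h]
  · have hψe : ψ e = 1 := Fin.eq_one_of_ne_zero _ (hgψ e h)
    simp [intCast_zmod_two_eq_one (hg1 e) h, hψe]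

theorem IsFlow.exists_signed_lift {ψ : E → ZMod 2} (hψ : G.IsFlow ψ) :
    ∃ g : E → ℤ, G.IsFlow g ∧ (∀ e, |g e| ≤ 1) ∧ ∀ e, g e = 0 ↔ ψ e = 0 := by
  induction hn : {e | ψ e ≠ 0}.ncard using Nat.strong_induction_on generalizing ψ with
  | _ n ih =>
  by_cases hzero : ∀ e, ψ e = 0
  · exact ⟨0, IsFlow.zero, by simp, by simpa using hzero⟩
  push Not at hzero
  obtain ⟨e, he⟩ := hzero
  obtain ⟨c, hc, hc1, hce, hcψ⟩ :=
    exists_signed_cycle_of_reaches (fun h => h.2 rfl) (hψ.reaches_of_ne_zero he)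
  have hcψ' : ∀ e', c e' ≠ 0 → ψ e' ≠ 0 := by
    intro e' h
    obtain rfl | hne := eq_or_ne e' e
    exacts [he, (hcψ e' hne h).1]
  have hlt : {e' | (if c e' = 0 then ψ e' else 0) ≠ 0}.ncard < n := by
    rw [← hn]
    refine Set.ncard_lt_ncard ⟨fun e' h => (ite_ne_right_iff.mp h).2, fun hsub => ?_⟩
      (Set.toFinite _)
    have := (ite_ne_right_iff.mp (hsub he)).1
    omega
  obtain ⟨g, hg, hg1, hgψ⟩ := ih _ hlt (hψ.ite_support_zmod_two hc hc1 hcψ') rfl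
  have hval : ∀ e', (c e' = 0 ∧ (g e' = 0 ↔ ψ e' = 0)) ∨ (c e' ≠ 0 ∧ g e' = 0 ∧ ψ e' ≠ 0) := by
    intro e'
    have := hgψ e'
    have := hcψ' e'
    grind
  refine ⟨g + c, hg.add hc, fun e' => ?_, fun e' => ?_⟩
  · rcases hval e' with ⟨h, -⟩ | ⟨-, h, -⟩
    · simpa [h] using hg1 e'
    · simpa [h] using hc1 e'
  · rcases hval e' with ⟨h, h'⟩ | ⟨h, h', h''⟩
    · simpa [h] using h'
    · simp [h, h', h'']

theorem isFlow_indicator_of_even_degreeIn {C : Set E} (hC : ∀ v, Even (G.degreeIn C v)) :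
    G.IsFlow fun e => if e ∈ C then (1 : ZMod 2) else 0 := by
  intro v
  have hcount : ∀ r : E → V, (∑ e, if r e = v then (if e ∈ C then (1 : ZMod 2) else 0) else 0) =
      ({e ∈ C | r e = v}.ncard : ZMod 2) := by
    intro r
    simp only [← ite_and]
    rw [Finset.sum_boole, ← Set.ncard_coe_finset]
    congr 2
    ext e
    simp [and_comm]
  rw [hcount, hcount, ← sub_eq_zero, CharTwo.sub_eq_add, ← Nat.cast_add]
  exact (ZMod.natCast_eq_zero_iff_even).mpr (hC v)

-- The lift of the indicator modulo 2 chooses a direction around the cycle.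
theorem IsCycle.exists_orientation {C : Set E} (hC : G.IsCycle C) :
    ∃ g : E → ℤ, G.IsFlow g ∧ (∀ e, |g e| ≤ 1) ∧ ∀ e, g e = 0 ↔ e ∉ C := by
  obtain ⟨g, hg, hg1, hgC⟩ :=
    (isFlow_indicator_of_even_degreeIn hC.even_degreeIn).exists_signed_lift
  exact ⟨g, hg, hg1, fun e => by simp [hgC e]⟩

theorem ConnectedVia.exists_boundary_eq [Fintype V] {P : E → Prop} (hP : G.ConnectedVia P)
    {β : V → A} (hβ : ∑ v, β v = 0) : ∃ φ : E → A, (∀ e, ¬ P e → φ e = 0) ∧ G.boundary φ = β := by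
  obtain ⟨⟨r⟩, hreach⟩ := hP
  have hpath : ∀ v, ∃ p : E → ℤ, (∀ e, ¬ P e → p e = 0) ∧
      G.boundary p = Pi.single v 1 - Pi.single r 1 := by
    intro v
    obtain ⟨D, hD, hDP⟩ := (hreach v r).exists_isPathSet
    obtain ⟨p, -, hpD, hpb⟩ := hD.exists_orientation
    exact ⟨p, fun e he => hpD e fun heD => he (hDP e heD), hpb⟩
  choose p hpP hpb using hpath
  refine ⟨∑ v, fun e => p v e • β v, fun e he => ?_, ?_⟩
  · simp [hpP _ e he]
  · ext w
    simp only [map_sum, boundary_smul_const, hpb, Finset.sum_apply, Pi.sub_apply, Pi.single_apply,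
      sub_smul, ite_smul, one_smul, zero_smul, Finset.sum_sub_distrib]
    split_ifs <;> simp [hβ]

theorem Connected.range_boundary [Fintype V] (hG : G.Connected) :
    Set.range (G.boundary (A := A)) = {β | ∑ v, β v = 0} := by
  ext β
  constructor
  · rintro ⟨φ, rfl⟩
    exact sum_boundary φ
  · intro hβ
    obtain ⟨φ, -, hφ⟩ := ConnectedVia.exists_boundary_eq hG hβ
    exact ⟨φ, hφ⟩

theorem Peripheral.exists_isFlow_eqOn [Finite V] {S : Set E} (hS : G.Peripheral S) (h : E → A) :
    ∃ φ : E → A, G.IsFlow φ ∧ Set.EqOn φ h S := by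
  cases nonempty_fintype V
  have hsum : ∑ v, (-G.boundary (S.indicator h)) v = 0 := by
    simp [sum_boundary]
  obtain ⟨φ, hφS, hφb⟩ := ConnectedVia.exists_boundary_eq hS hsum
  refine ⟨S.indicator h + φ, isFlow_iff_boundary_eq_zero.mpr ?_, fun e he => ?_⟩
  · rw [map_add, hφb, add_neg_cancel]
  · simp [he, hφS e (not_not.mpr he)]

theorem Peripheral.exists_isFlow_zmod_two_correcting [Finite V] {S : Set E}
    (hS : G.Peripheral S) {f : E → A} {c : A} (hc : c ≠ 0)
    (hφ : ∀ e ∉ S, φ e ∉ ({f e, f e + c, f e - c} : Finset A)) :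
    ∃ ψ : E → ZMod 2, G.IsFlow ψ ∧ ∀ g : E → ℤ, (∀ e, |g e| ≤ 1) → (∀ e, g e = 0 ↔ ψ e = 0) →
      ∀ e, φ e + g e • c ≠ f e := by
  obtain ⟨ψ, hψ, hψS⟩ := hS.exists_isFlow_eqOn fun e => if φ e = f e then (1 : ZMod 2) else 0
  refine ⟨ψ, hψ, fun g hg1 hgψ e => ?_⟩
  by_cases he : e ∈ S
  · have hψe := hψS he
    by_cases hfe : φ e = f e
    · have hge : g e ≠ 0 := by simp [hgψ e, hψe, hfe]
      rw [hfe, Ne, add_eq_left]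
      rcases Int.abs_le_one_iff.mp (hg1 e) with h | h | h
      exacts [absurd h hge, by simpa [h] using hc, by simpa [h] using hc]
    · have hge : g e = 0 := by simp [hgψ e, hψe, hfe]
      simpa [hge] using hfe
  · have hφe := hφ e he
    simp only [Finset.mem_insert, Finset.mem_singleton, not_or] at hφe
    rcases Int.abs_le_one_iff.mp (hg1 e) with h | h | h
    · simpa [h] using hφe.1
    · simpa [h, ← eq_sub_iff_add_eq] using hφe.2.2
    · simpa [h, ← sub_eq_add_neg, sub_eq_iff_eq_add] using hφe.2.1

end Boundary

section Closure

variable {V E : Type} {G : Multigraph V E} {k : ℕ} {S R : Set E}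

theorem subset_kClosure (G : Multigraph V E) (k : ℕ) (S : Set E) : S ⊆ G.kClosure k S :=
  Set.subset_sInter fun _ h => h.1

theorem IsBase.eq_univ_of_closed (hS : G.IsBase k S) (hSR : S ⊆ R) (hR : G.Closed k R) :
    R = Set.univ :=
  Set.univ_subset_iff.mp (hS ▸ Set.sInter_subset_of_mem ⟨hSR, hR⟩)

variable [Finite E]

theorem closed_kClosure (G : Multigraph V E) (k : ℕ) (S : Set E) : G.Closed k (G.kClosure k S) := by
  rintro C hC ⟨e, heC, heS⟩
  simp only [kClosure, Set.mem_sInter, not_forall] at heS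
  obtain ⟨R, hR, heR⟩ := heS
  exact (hR.2 C hC ⟨e, heC, heR⟩).trans
    (Set.ncard_le_ncard (Set.sdiff_subset_sdiff_right (Set.sInter_subset_of_mem hR))
      (Set.toFinite _))

theorem IsBase.induction (hS : G.IsBase k S) {p : Set E → Prop} (univ : p Set.univ)
    (step : ∀ R C, G.IsCycle C → (C \ R).Nonempty → (C \ R).ncard ≤ k → p (R ∪ C) → p R) :
    p S := by
  suffices h : ∀ R, S ⊆ R → p R from h S subset_rfl
  intro R hSR
  induction hn : Rᶜ.ncard using Nat.strong_induction_on generalizing R with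
  | _ n ih =>
  by_cases hR : G.Closed k R
  · exact hS.eq_univ_of_closed hSR hR ▸ univ
  · simp only [Closed, not_forall, not_le] at hR
    obtain ⟨C, hC, ⟨e, heC, heR⟩, hCR⟩ := hR
    have hlt : (R ∪ C)ᶜ.ncard < n := by
      rw [← hn]
      exact Set.ncard_lt_ncard ⟨Set.compl_subset_compl.mpr Set.subset_union_left,
        fun hsub => hsub heR (Or.inr heC)⟩ (Set.toFinite _)
    exact step R C hC ⟨e, heC, heR⟩ (Nat.le_of_lt_succ hCR)
      (ih _ hlt _ (hSR.trans Set.subset_union_left) rfl)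

end Closure

section Counting

theorem zsmul_left_injective_of_abs_le_one {A : Type} [AddCommGroup A] {n : ℤ}
    (hn : |n| ≤ 1) (h0 : n ≠ 0) :
    Function.Injective fun a : A => n • a := by
  intro a b hab
  rcases Int.abs_le_one_iff.mp hn with rfl | rfl | rfl
  · exact absurd rfl h0
  · simpa using hab
  · simpa using hab

variable {V E : Type} [Fintype E] {A : Type} [AddCommGroup A] [Fintype A]
  {G : Multigraph V E} {R C : Set E} {φ : E → A} {bad : E → Finset A} {k q : ℕ}

/-- The flows whose values avoid the prescribed finite sets `bad e` on the edges `e` outside `R`. -/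
noncomputable def avoiding (G : Multigraph V E) (bad : E → Finset A) (R : Set E) :
    Finset (E → A) :=
  {φ | G.IsFlow φ ∧ ∀ e ∉ R, φ e ∉ bad e}

/-- The flows supported on `R`. -/
noncomputable def supported (G : Multigraph V E) (A : Type) [AddCommGroup A] [Fintype A]
    (R : Set E) : Finset (E → A) :=
  {φ | G.IsFlow φ ∧ ∀ e ∉ R, φ e = 0}

theorem mem_avoiding : φ ∈ G.avoiding bad R ↔ G.IsFlow φ ∧ ∀ e ∉ R, φ e ∉ bad e := by
  simp [avoiding]

theorem mem_supported : φ ∈ G.supported A R ↔ G.IsFlow φ ∧ ∀ e ∉ R, φ e = 0 := by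
  simp [supported]

theorem avoiding_univ (G : Multigraph V E) (bad : E → Finset A) :
    G.avoiding bad Set.univ = G.supported A Set.univ := by
  simp [avoiding, supported]

theorem card_supported_pos (G : Multigraph V E) (A : Type) [AddCommGroup A] [Fintype A]
    (R : Set E) : 0 < (G.supported A R).card :=
  Finset.card_pos.mpr ⟨0, mem_supported.mpr ⟨IsFlow.zero, fun _ _ => rfl⟩⟩

theorem IsFlow.card_sub_le_card_shift_mem_avoiding {g : E → ℤ} (hg : G.IsFlow g)
    (hg1 : ∀ e, |g e| ≤ 1) (hgC : ∀ e, g e = 0 ↔ e ∉ C) (hCR : (C \ R).ncard ≤ k)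
    (hq : ∀ e, (bad e).card ≤ q) (hφ : φ ∈ G.avoiding bad (R ∪ C)) :
    Fintype.card A - k * q ≤
      ({a | (φ + fun e => g e • a) ∈ G.avoiding bad R} : Finset A).card := by
  obtain ⟨hflow, havoid⟩ := mem_avoiding.mp hφ
  set good : Finset A := {a | (φ + fun e => g e • a) ∈ G.avoiding bad R} with hgood
  set blocked : E → Finset A := fun e => {a | φ e + g e • a ∈ bad e} with hblocked
  have hcover : Finset.univ ⊆ good ∪ (C \ R).toFinset.biUnion blocked := by
    intro a _
    by_contra ha
    simp only [Finset.mem_union, Finset.mem_biUnion, Set.mem_toFinset, not_or, not_exists,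
      not_and, hgood, hblocked, Finset.mem_filter, Finset.mem_univ, true_and] at ha
    refine ha.1 (mem_avoiding.mpr ⟨hflow.add (hg.smul_const a), fun e he => ?_⟩)
    by_cases heC : e ∈ C
    · exact ha.2 e ⟨heC, he⟩
    · simpa [(hgC e).mpr heC] using havoid e (by simp [he, heC])
  have hblocked_le : ∀ e ∈ (C \ R).toFinset, (blocked e).card ≤ q := by
    intro e he
    have heC : e ∈ C := (Set.mem_toFinset.mp he).1
    refine (Finset.card_le_card_of_injOn (fun a => φ e + g e • a) (fun a ha => ?_) ?_).trans (hq e)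
    · simpa [hblocked] using ha
    · exact ((add_right_injective (φ e)).comp
        (zsmul_left_injective_of_abs_le_one (hg1 e) fun h0 => (hgC e).mp h0 heC)).injOn
  have htotal := (Finset.card_le_card hcover).trans (Finset.card_union_le _ _)
  have hbiUnion := Finset.card_biUnion_le_card_mul _ _ _ hblocked_le
  have hcard : (C \ R).toFinset.card * q ≤ k * q := by
    rw [← Set.ncard_eq_toFinset_card']
    exact Nat.mul_le_mul_right _ hCR
  rw [Finset.card_univ] at htotal
  omega

theorem IsCycle.mul_card_avoiding_union_le (hC : G.IsCycle C) (hCR : (C \ R).ncard ≤ k)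
    (hq : ∀ e, (bad e).card ≤ q) :
    (Fintype.card A - k * q) * (G.avoiding bad (R ∪ C)).card ≤
      Fintype.card A * (G.avoiding bad R).card := by
  obtain ⟨g, hg, hg1, hgC⟩ := hC.exists_orientation
  rw [mul_comm, ← Finset.card_univ (α := A)]
  refine Finset.card_mul_le_card_mul
    (fun (φ : E → A) (a : A) => (φ + fun e => g e • a) ∈ G.avoiding bad R)
    (fun φ hφ => hg.card_sub_le_card_shift_mem_avoiding hg1 hgC hCR hq hφ) (fun a _ => ?_)
  exact Finset.card_le_card_of_injOn (fun φ => φ + fun e => g e • a)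
    (fun φ hφ => ((Finset.mem_bipartiteBelow _).mp hφ).2) (add_left_injective _).injOn

theorem IsCycle.mul_card_supported_le (hC : G.IsCycle C) (hCR : (C \ R).Nonempty) :
    Fintype.card A * (G.supported A R).card ≤ (G.supported A (R ∪ C)).card := by
  obtain ⟨g, hg, hg1, hgC⟩ := hC.exists_orientation
  obtain ⟨e, heC, heR⟩ := hCR
  rw [← Finset.card_univ, ← Finset.card_product]
  refine Finset.card_le_card_of_injOn (fun x => x.2 + fun e => g e • x.1) ?_ ?_
  · rintro ⟨a, φ⟩ hφ
    obtain ⟨hflow, hsupp⟩ := mem_supported.mp (Finset.mem_product.mp hφ).2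
    refine Finset.mem_coe.mpr (mem_supported.mpr ⟨hflow.add (hg.smul_const a), fun e' he' => ?_⟩)
    rw [Set.mem_union, not_or] at he'
    have hφe' : φ e' = 0 := hsupp e' he'.1
    simp [hφe', (hgC e').mpr he'.2]
  · rintro ⟨a, φ⟩ hφ ⟨b, ψ⟩ hψ h
    have hφe : φ e = 0 := (mem_supported.mp (Finset.mem_product.mp hφ).2).2 e heR
    have hψe : ψ e = 0 := (mem_supported.mp (Finset.mem_product.mp hψ).2).2 e heR
    have hab : g e • a = g e • b := by simpa [hφe, hψe] using congrFun h e
    obtain rfl :=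
      zsmul_left_injective_of_abs_le_one (hg1 e) (fun h0 => (hgC e).mp h0 heC) hab
    exact congrArg (Prod.mk a) (add_right_cancel (h : φ + _ = ψ + _))

theorem Peripheral.card_avoiding_le [Finite V] {S : Set E} (hS : G.Peripheral S) (f : E → A) {c : A}
    (hc : c ≠ 0) :
    (G.avoiding (fun e => {f e, f e + c, f e - c}) S).card ≤
      (G.supported (ZMod 2) Set.univ).card * (G.avoiding (fun e => {f e}) ∅).card := by
  have hlift : ∀ ψ : E → ZMod 2, G.IsFlow ψ →
      ∃ g : E → ℤ, G.IsFlow g ∧ (∀ e, |g e| ≤ 1) ∧ ∀ e, g e = 0 ↔ ψ e = 0 :=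
    fun _ hψ => hψ.exists_signed_lift
  choose! lift hlift_flow hlift_le hlift_zero using hlift
  have hcover : G.avoiding (fun e => {f e, f e + c, f e - c}) S ⊆
      (G.supported (ZMod 2) Set.univ).biUnion fun ψ =>
        (G.avoiding (fun e => {f e}) ∅).image fun φ => φ - fun e => lift ψ e • c := by
    intro φ hφ
    obtain ⟨hflow, havoid⟩ := mem_avoiding.mp hφ
    obtain ⟨ψ, hψ, hcorrect⟩ := hS.exists_isFlow_zmod_two_correcting hc havoid
    have hmem : (φ + fun e => lift ψ e • c) ∈ G.avoiding (fun e => {f e}) ∅ :=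
      mem_avoiding.mpr ⟨hflow.add ((hlift_flow ψ hψ).smul_const c), fun e _ =>
        Finset.notMem_singleton.mpr (hcorrect _ (hlift_le ψ hψ) (hlift_zero ψ hψ) e)⟩
    exact Finset.mem_biUnion.mpr ⟨ψ, mem_supported.mpr ⟨hψ, by simp⟩,
      Finset.mem_image.mpr ⟨_, hmem, add_sub_cancel_right _ _⟩⟩
  exact (Finset.card_le_card hcover).trans
    (Finset.card_biUnion_le_card_mul _ _ _ fun _ _ => Finset.card_image_le)

variable [Fintype V]

theorem Connected.card_flows_mul (hG : G.Connected) :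
    (G.supported A Set.univ).card * Fintype.card A ^ Fintype.card V =
      Fintype.card A ^ (Fintype.card E + 1) := by
  obtain ⟨r⟩ := hG.1
  let total : (V → A) →+ A := ∑ v, Pi.evalAddMonoidHom (fun _ => A) v
  have htotal : ∀ β, total β = ∑ v, β v := fun β => by simp [total]
  have hsurj : Function.Surjective total := fun a => ⟨Pi.single r a, by simp [htotal]⟩
  have hrange : (G.boundary (A := A)).range = total.ker := by
    refine SetLike.coe_injective ((AddMonoidHom.coe_range _).trans (hG.range_boundary.trans ?_))
    ext β
    simp [AddMonoidHom.mem_ker, htotal]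
  have hker : Nat.card (G.boundary (A := A)).ker = (G.supported A Set.univ).card := by
    rw [← Nat.card_eq_finsetCard]
    exact Nat.card_congr (Equiv.subtypeEquivRight fun φ => by
      simp [mem_supported, AddMonoidHom.mem_ker, isFlow_iff_boundary_eq_zero])
  have hE := (G.boundary (A := A)).ker.card_mul_index
  have hV := total.ker.card_mul_index
  rw [AddSubgroup.index_ker, hrange] at hE
  rw [AddSubgroup.index_ker, AddMonoidHom.range_eq_top.mpr hsurj, AddSubgroup.card_top] at hV
  simp only [hker, Nat.card_eq_fintype_card, Fintype.card_fun] at hE hV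
  rw [← hV, ← mul_assoc, hE, pow_succ]

theorem Connected.card_le_card_add_one (hG : G.Connected) :
    Fintype.card V ≤ Fintype.card E + 1 :=
  (Nat.pow_le_pow_iff_right (a := Fintype.card (ZMod 2)) (by simp)).mp
    (hG.card_flows_mul (A := ZMod 2) ▸ Nat.le_mul_of_pos_left _ (card_supported_pos G _ _))

theorem Connected.card_flows (hG : G.Connected) :
    (G.supported A Set.univ).card = Fintype.card A ^ (Fintype.card E + 1 - Fintype.card V) := by
  refine Nat.eq_of_mul_eq_mul_right (m := Fintype.card A ^ Fintype.card V)
    (pow_pos Fintype.card_pos _) ?_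
  rw [hG.card_flows_mul, ← pow_add, Nat.sub_add_cancel hG.card_le_card_add_one]

-- Each cycle added to `S` costs a factor `(|A| - k * q) / |A|`, but there are at most as many
-- additions as the rank of the flow group, since each one multiplies the supported flows by `|A|`.
theorem IsBase.pow_le_card_avoiding [Nontrivial A] {S : Set E} (hS : G.IsBase k S)
    (hG : G.Connected) (hq : ∀ e, (bad e).card ≤ q) :
    (Fintype.card A - k * q) ^ (Fintype.card E + 1 - Fintype.card V) ≤
      (G.avoiding bad S).card := by
  set n := Fintype.card A
  set d := Fintype.card E + 1 - Fintype.card V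
  have hn1 : 1 < n := Fintype.one_lt_card
  let p : Set E → Prop := fun R => ∃ i j, i + j = d ∧ (G.supported A R).card ≤ n ^ j ∧
    (n - k * q) ^ i * n ^ j ≤ (G.avoiding bad R).card
  obtain ⟨i, j, hij, -, havoid⟩ : p S := by
    refine hS.induction ⟨0, d, zero_add d, hG.card_flows.le, ?_⟩ fun R C hC hCne hCk ih => ?_
    · rw [avoiding_univ, hG.card_flows, pow_zero, one_mul]
    obtain ⟨i, j, hij, hsupp, havoid⟩ := ih
    have hsupp' : n * (G.supported A R).card ≤ n ^ j :=
      (hC.mul_card_supported_le hCne).trans hsupp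
    obtain ⟨j, rfl⟩ : ∃ j', j = j' + 1 := Nat.exists_eq_succ_of_ne_zero <| by
      rintro rfl
      exact absurd ((Nat.le_mul_of_pos_right n (card_supported_pos G A R)).trans hsupp')
        (by simpa using hn1)
    refine ⟨i + 1, j, by omega, Nat.le_of_mul_le_mul_left (pow_succ' n j ▸ hsupp') (by omega),
      Nat.le_of_mul_le_mul_left ?_ (show 0 < n by omega)⟩
    calc n * ((n - k * q) ^ (i + 1) * n ^ j)
        = (n - k * q) * ((n - k * q) ^ i * n ^ (j + 1)) := by ring
      _ ≤ (n - k * q) * (G.avoiding bad (R ∪ C)).card := Nat.mul_le_mul_left _ havoid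
      _ ≤ n * (G.avoiding bad R).card := hC.mul_card_avoiding_union_le hCk hq
  calc (n - k * q) ^ d = (n - k * q) ^ i * (n - k * q) ^ j := by rw [← hij, pow_add]
    _ ≤ (n - k * q) ^ i * n ^ j := by
      gcongr
      exact Nat.sub_le _ _
    _ ≤ (G.avoiding bad S).card := havoid

theorem IsBase.pow_le_two_pow_mul_card {S : Set E} (hS : G.IsBase k S) (hper : G.Peripheral S)
    (f : E → A) {c : A} (hc : c ≠ 0) (hq : ∀ a, ({a, a + c, a - c} : Finset A).card ≤ q) :
    (Fintype.card A - k * q) ^ (Fintype.card E + 1 - Fintype.card V) ≤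
      2 ^ (Fintype.card E + 1 - Fintype.card V) *
        Nat.card {φ : E → A // G.IsFlow φ ∧ ∀ e, φ e ≠ f e} := by
  have : Nontrivial A := nontrivial_of_ne c 0 hc
  have hgood : Nat.card {φ : E → A // G.IsFlow φ ∧ ∀ e, φ e ≠ f e} =
      (G.avoiding (fun e => {f e}) ∅).card := by
    rw [← Nat.card_eq_finsetCard]
    exact Nat.card_congr (Equiv.subtypeEquivRight fun φ => by simp [mem_avoiding])
  have htwo := hper.connected.card_flows (A := ZMod 2)
  rw [ZMod.card] at htwo
  rw [hgood, ← htwo]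
  exact (hS.pow_le_card_avoiding hper.connected fun e => hq (f e)).trans
    (hper.card_avoiding_le f hc)

end Counting

section Cuts

variable {V E : Type} {G : Multigraph V E} {P : E → Prop} {X Y A : Set V}
  {a b u v x y x' y' : V} {e f : E} {k : ℕ}

/-- The edges with one end in `X` and the other one in `Y`. -/
def between (G : Multigraph V E) (X Y : Set V) : Set E :=
  {e | (G.src e ∈ X ∧ G.tgt e ∈ Y) ∨ (G.src e ∈ Y ∧ G.tgt e ∈ X)}

theorem IsLink.mem_between (h : G.IsLink e x y) (hx : x ∈ X) (hy : y ∈ Y) : e ∈ G.between X Y := by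
  rcases h with ⟨rfl, rfl⟩ | ⟨rfl, rfl⟩
  exacts [Or.inl ⟨hx, hy⟩, Or.inr ⟨hy, hx⟩]

theorem mem_between_iff : e ∈ G.between X Y ↔ ∃ x ∈ X, ∃ y ∈ Y, G.IsLink e x y := by
  constructor
  · rintro (⟨hsrc, htgt⟩ | ⟨hsrc, htgt⟩)
    exacts [⟨_, hsrc, _, htgt, G.isLink_src_tgt e⟩, ⟨_, htgt, _, hsrc, (G.isLink_src_tgt e).symm⟩]
  · rintro ⟨x, hx, y, hy, hlink⟩
    exact hlink.mem_between hx hy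

theorem cutEdges_eq_between (G : Multigraph V E) (X : Set V) : G.cutEdges X = G.between X Xᶜ :=
  rfl

theorem between_comm (G : Multigraph V E) (X Y : Set V) : G.between X Y = G.between Y X :=
  Set.ext fun _ => or_comm

theorem between_union_right (G : Multigraph V E) (X Y Z : Set V) :
    G.between X (Y ∪ Z) = G.between X Y ∪ G.between X Z := by
  ext e
  simp only [between, Set.mem_union, Set.mem_ofPred_eq]
  tauto

theorem IsLink.left_unique_of_mem (h : G.IsLink e x y) (h' : G.IsLink e x' y') (hx' : x' ∈ X)
    (hy : y ∉ X) : x = x' := by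
  rcases h with ⟨rfl, rfl⟩ | ⟨rfl, rfl⟩ <;> rcases h' with ⟨rfl, rfl⟩ | ⟨rfl, rfl⟩
  exacts [rfl, absurd hx' hy, absurd hx' hy, rfl]

theorem EdgeConnected.le_ncard_cutEdges (hG : G.EdgeConnected k) (hu : u ∈ X) (hv : v ∉ X) :
    k ≤ (G.cutEdges X).ncard := by
  by_contra! hlt
  obtain ⟨e, he, he'⟩ := ((hG _ hlt).2 u v).exists_mem_cutEdges hu hv
  exact he' he

theorem Reaches.and_ne_or_reaches_src (h : G.Reaches P u v) (f : E) :
    G.Reaches (fun e => P e ∧ e ≠ f) u v ∨ G.Reaches P u (G.src f) := by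
  induction h with
  | refl => exact Or.inl (Reaches.refl _)
  | @tail b c hab hbc ih =>
    obtain ⟨g, hg, hlink⟩ := hbc
    refine ih.elim (fun ih => ?_) Or.inr
    obtain rfl | hgf := eq_or_ne g f
    · rcases hlink with ⟨hsrc, -⟩ | ⟨hsrc, htgt⟩
      · exact Or.inr (hsrc ▸ hab)
      · exact Or.inr (hsrc ▸ hab.tail ⟨g, hg, Or.inr ⟨hsrc, htgt⟩⟩)
    · exact Or.inl (ih.trans (IsLink.reaches hlink ⟨hg, hgf⟩))

-- Stop the walk when it first enters `X`.
theorem Reaches.exists_ncard_crossing_le_one (h : G.Reaches P u v) (hv : v ∈ X) :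
    ∃ s : Set E, s.ncard ≤ 1 ∧ ∃ y ∈ X,
      G.Reaches (fun e => P e ∧ (e ∈ G.cutEdges X → e ∈ s)) u y := by
  induction h using Relation.ReflTransGen.head_induction_on with
  | refl => exact ⟨∅, by simp, v, hv, Reaches.refl _⟩
  | @head a b hab _ ih =>
    obtain ⟨g, hg, hlink⟩ := hab
    by_cases haX : a ∈ X
    · exact ⟨∅, by simp, a, haX, Reaches.refl _⟩
    by_cases hbX : b ∈ X
    · exact ⟨{g}, by simp, b, hbX, IsLink.reaches hlink ⟨hg, fun _ => rfl⟩⟩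
    · obtain ⟨s, hs, y, hy, hby⟩ := ih
      refine ⟨s, hs, y, hy, (IsLink.reaches hlink ⟨hg, fun hgX => ?_⟩).trans hby⟩
      obtain ⟨hsrc, htgt⟩ := (IsLink.forall_ends_iff hlink (· ∉ X)).mpr ⟨haX, hbX⟩
      exact absurd hgX (by simp [cutEdges, hsrc, htgt])

theorem Reaches.exists_ncard_le_one_forall_reaches (h : G.Reaches P u v) (hv : v ∈ X)
    (hX : ∀ x ∈ X, ∀ y ∈ X, G.Reaches (fun e => P e ∧ e ∉ G.cutEdges X) x y) :
    ∃ s : Set E, s.ncard ≤ 1 ∧ ∀ f ∈ G.cutEdges X, f ∉ s → ∀ x ∈ X,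
      G.Reaches (fun e => P e ∧ e ≠ f) u x := by
  obtain ⟨s, hs, y, hy, huy⟩ := h.exists_ncard_crossing_le_one hv
  refine ⟨s, hs, fun f hf hfs x hx => ?_⟩
  refine Reaches.trans (huy.mono fun e he => ⟨he.1, ?_⟩)
    ((hX y hy x hx).mono fun e he => ⟨he.1, ?_⟩)
  · rintro rfl
    exact hfs (he.2 hf)
  · rintro rfl
    exact he.2 hf

theorem Reaches.exists_ncard_le_one_of_bridge (h : G.Reaches P a b) (hfX : f ∈ G.cutEdges X)
    (hf : P f) (hbridge : ¬ G.Reaches (fun e => P e ∧ e ≠ f) a b)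
    (hX : ∀ x ∈ X, ∀ y ∈ X, G.Reaches (fun e => P e ∧ e ∉ G.cutEdges X) x y) :
    ∃ s : Set E, s.ncard ≤ 1 ∧ ∀ g ∈ G.cutEdges X, g ∉ s → ∀ x ∈ X,
      G.Reaches (fun e => P e ∧ e ≠ g) a x := by
  have hsrc := (h.and_ne_or_reaches_src f).resolve_left hbridge
  rcases hfX with ⟨hX', -⟩ | ⟨-, hX'⟩
  · exact hsrc.exists_ncard_le_one_forall_reaches hX' hX
  · exact (hsrc.trans ((G.isLink_src_tgt f).reaches hf)).exists_ncard_le_one_forall_reaches hX' hX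

theorem Reaches.exists_reaches_and_ne_of_cut [Finite E] (h : G.Reaches P a b) (ha : a ∈ A)
    (hb : b ∈ A) (hab : a ≠ b)
    (hX : ∀ x ∈ X, ∀ y ∈ X, G.Reaches (fun e => P e ∧ e ∉ G.cutEdges X) x y)
    (htwo : 2 ≤ {e ∈ G.cutEdges X | P e}.ncard)
    (hthree : Disjoint X A → 3 ≤ {e ∈ G.cutEdges X | P e}.ncard) :
    ∃ f ∈ G.cutEdges X, P f ∧ ∃ a' ∈ A, ∃ b' ∈ A, a' ≠ b' ∧
      G.Reaches (fun e => P e ∧ e ≠ f) a' b' := by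
  by_contra! hbridge
  obtain ⟨f, hfX, hf⟩ := Set.nonempty_of_ncard_ne_zero
    (show {e ∈ G.cutEdges X | P e}.ncard ≠ 0 by omega)
  obtain ⟨s, hs, has⟩ :=
    h.exists_ncard_le_one_of_bridge hfX hf (hbridge f hfX hf a ha b hb hab) hX
  obtain ⟨t, ht, hbt⟩ :=
    h.symm.exists_ncard_le_one_of_bridge hfX hf (hbridge f hfX hf b hb a ha hab.symm) hX
  by_cases hdisj : Disjoint X A
  · have hst : (s ∪ t).ncard < {e ∈ G.cutEdges X | P e}.ncard := by
      have := Set.ncard_union_le s t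
      have := hthree hdisj
      omega
    obtain ⟨g, ⟨hgX, hg⟩, hgst⟩ := Set.exists_mem_notMem_of_ncard_lt_ncard hst
    rw [Set.mem_union, not_or] at hgst
    obtain ⟨x, hx⟩ : X.Nonempty := hfX.elim (fun h => ⟨_, h.1⟩) (fun h => ⟨_, h.2⟩)
    exact hbridge g hgX hg a ha b hb hab
      ((has g hgX hgst.1 x hx).trans (hbt g hgX hgst.2 x hx).symm)
  · obtain ⟨c, hcX, hcA⟩ := Set.not_disjoint_iff.mp hdisj
    obtain ⟨a', ha', hne, s, hs, has⟩ : ∃ a' ∈ A, a' ≠ c ∧ ∃ s : Set E, s.ncard ≤ 1 ∧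
        ∀ f ∈ G.cutEdges X, f ∉ s → ∀ x ∈ X, G.Reaches (fun e => P e ∧ e ≠ f) a' x := by
      obtain rfl | hac := eq_or_ne a c
      exacts [⟨b, hb, hab.symm, t, ht, hbt⟩, ⟨a, ha, hac, s, hs, has⟩]
    obtain ⟨g, ⟨hgX, hg⟩, hgs⟩ := Set.exists_mem_notMem_of_ncard_lt_ncard (hs.trans_lt htwo)
    exact hbridge g hgX hg a' ha' c hcA hne (has g hgX hgs c hcX)

end Cuts

section Reserve

variable {V E : Type} {G : Multigraph V E} {L A : Set V} {T : Set E} {a b w z : V} {e f : E}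

/-- A connected set `T` of edges of `G[L]` through `z` such that the remaining edges of `G[L]`
still join two distinct vertices of `A`. -/
structure IsReserve (G : Multigraph V E) (L A : Set V) (z : V) (T : Set E) : Prop where
  inside : ∀ e ∈ T, G.src e ∈ L ∧ G.tgt e ∈ L
  reaches : ∀ e ∈ T, G.Reaches (· ∈ T) z (G.src e)
  joined : ∃ a ∈ A, ∃ b ∈ A, a ≠ b ∧
    G.Reaches (fun e => e ∉ T ∧ G.src e ∈ L ∧ G.tgt e ∈ L) a b

theorem connectedOn_of_between_nonempty
    (hL : ∀ X ⊆ L, X.Nonempty → X ≠ L → (G.between X (L \ X)).Nonempty) :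
    G.ConnectedOn L fun _ => True := by
  intro u hu v hv
  by_contra hnot
  set X : Set V := {w ∈ L | G.Reaches (fun e => True ∧ G.src e ∈ L ∧ G.tgt e ∈ L) u w}
  obtain ⟨e, he⟩ := hL X (Set.sep_subset _ _) ⟨u, hu, Reaches.refl _⟩
    fun hX => hnot (hX ▸ hv : v ∈ X).2
  obtain ⟨x, hx, y, hy, hlink⟩ := mem_between_iff.mp he
  exact hy.2 ⟨hy.1, hx.2.trans
    (hlink.reaches ⟨trivial, (hlink.forall_ends_iff (· ∈ L)).mpr ⟨hx.1, hy.1⟩⟩)⟩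

theorem IsReserve.reaches_ends (hT : G.IsReserve L A z T) (he : e ∈ T) :
    G.Reaches (· ∈ T) z (G.src e) ∧ G.Reaches (· ∈ T) z (G.tgt e) :=
  ⟨hT.reaches e he, (hT.reaches e he).trans ((G.isLink_src_tgt e).reaches he)⟩

theorem IsReserve.exists_unreached_side (hT : G.IsReserve L A z T) (hw : w ∈ L)
    (hzw : ¬ G.Reaches (· ∈ T) z w) :
    ∃ X ⊆ L, w ∈ X ∧ z ∉ X ∧
      (∀ x ∈ X, ∀ y ∈ X, G.Reaches
        (fun e => (e ∉ T ∧ G.src e ∈ L ∧ G.tgt e ∈ L) ∧ e ∉ G.cutEdges X) x y) ∧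
      G.between X (L \ X) ⊆ {e ∈ G.cutEdges X | e ∉ T ∧ G.src e ∈ L ∧ G.tgt e ∈ L} ∧
      ∀ e ∈ G.between X (L \ X),
        G.Reaches (· ∈ T) z (G.src e) ∨ G.Reaches (· ∈ T) z (G.tgt e) := by
  set free : V → Prop := fun v => v ∈ L ∧ ¬ G.Reaches (· ∈ T) z v
  set P : E → Prop := fun e => free (G.src e) ∧ free (G.tgt e)
  set X : Set V := {v | G.Reaches P w v}
  have hfree : ∀ x ∈ X, free x := fun x hx => hx.of_forall_ends (fun _ he => he) ⟨hw, hzw⟩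
  refine ⟨X, fun x hx => (hfree x hx).1, Reaches.refl _, fun hz => (hfree z hz).2 (Reaches.refl _),
    fun x hx y hy => ?_, fun e he => ?_, fun e he => ?_⟩
  · refine (hx.and_reaches_src.symm.trans hy.and_reaches_src).mono fun e ⟨hP, hsrc⟩ => ?_
    have htgt : G.tgt e ∈ X := ((G.isLink_src_tgt e).reaches_iff hP).mp hsrc
    exact ⟨⟨fun heT => hP.1.2 (hT.reaches e heT), hP.1.1, hP.2.1⟩,
      fun hcut => hcut.elim (fun h => h.2 htgt) fun h => h.1 hsrc⟩
  · obtain ⟨x, hx, y, hy, hlink⟩ := mem_between_iff.mp he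
    refine ⟨G.cutEdges_eq_between X ▸ hlink.mem_between hx hy.2, fun heT => (hfree x hx).2 ?_,
      (hlink.forall_ends_iff (· ∈ L)).mpr ⟨(hfree x hx).1, hy.1⟩⟩
    exact ((hlink.forall_ends_iff _).mp (hT.reaches_ends heT)).1
  · obtain ⟨x, hx, y, hy, hlink⟩ := mem_between_iff.mp he
    refine (hlink.exists_ends_iff _).mpr (Or.inr (by_contra fun hzy => hy.2 ?_))
    exact Reaches.trans hx
      (hlink.reaches ((hlink.forall_ends_iff free).mpr ⟨hfree x hx, hy.1, hzy⟩))

theorem IsReserve.insert_edge (hT : G.IsReserve L A z T) (hf : G.src f ∈ L ∧ G.tgt f ∈ L)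
    (hzf : G.Reaches (· ∈ T) z (G.src f) ∨ G.Reaches (· ∈ T) z (G.tgt f)) (ha : a ∈ A) (hb : b ∈ A)
    (hab : a ≠ b)
    (hreach : G.Reaches (fun e => (e ∉ T ∧ G.src e ∈ L ∧ G.tgt e ∈ L) ∧ e ≠ f) a b) :
    G.IsReserve L A z (insert f T) where
  inside := Set.forall_mem_insert.mpr ⟨hf, hT.inside⟩
  reaches := by
    have hmono : ∀ v, G.Reaches (· ∈ T) z v → G.Reaches (· ∈ insert f T) z v :=
      fun v hv => hv.mono fun _ => Set.mem_insert_of_mem f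
    refine Set.forall_mem_insert.mpr ⟨?_, fun e he => hmono _ (hT.reaches e he)⟩
    refine hzf.elim (hmono _) fun htgt => ?_
    exact ((G.isLink_src_tgt f).reaches_iff (Set.mem_insert f T)).mpr (hmono _ htgt)
  joined := ⟨a, ha, b, hb, hab, hreach.mono fun e he =>
    ⟨fun hmem => hmem.elim he.2 he.1.1, he.1.2⟩⟩

variable [Finite E]

theorem IsReserve.exists_insert (hT : G.IsReserve L A z T) (hz : z ∈ L)
    (htwo : ∀ X ⊆ L, X.Nonempty → X ≠ L → 2 ≤ (G.between X (L \ X)).ncard)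
    (hthree : ∀ X ⊆ L, X.Nonempty → z ∉ X → Disjoint X A → 3 ≤ (G.between X (L \ X)).ncard)
    (hw : w ∈ L) (hzw : ¬ G.Reaches (· ∈ T) z w) : ∃ f ∉ T, G.IsReserve L A z (insert f T) := by
  obtain ⟨X, hXL, hwX, hzX, hX, hcut, hzcut⟩ := hT.exists_unreached_side hw hzw
  obtain ⟨a, ha, b, hb, hab, hreach⟩ := hT.joined
  have hle := Set.ncard_le_ncard hcut (Set.toFinite _)
  obtain ⟨f, hfX, hf, a', ha', b', hb', hab', hreach'⟩ :=
    hreach.exists_reaches_and_ne_of_cut ha hb hab hX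
      ((htwo X hXL ⟨w, hwX⟩ fun h => hzX (h ▸ hz)).trans hle)
      fun hdisj => (hthree X hXL ⟨w, hwX⟩ hzX hdisj).trans hle
  have hfbetween : f ∈ G.between X (L \ X) :=
    hfX.imp (fun h => ⟨h.1, hf.2.2, h.2⟩) fun h => ⟨⟨hf.2.1, h.1⟩, h.2⟩
  exact ⟨f, hf.1, hT.insert_edge hf.2 (hzcut f hfbetween) ha' hb' hab' hreach'⟩

theorem exists_connectedOn_and_reaches (hz : z ∈ L)
    (htwo : ∀ X ⊆ L, X.Nonempty → X ≠ L → 2 ≤ (G.between X (L \ X)).ncard)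
    (hthree : ∀ X ⊆ L, X.Nonempty → z ∉ X → Disjoint X A → 3 ≤ (G.between X (L \ X)).ncard)
    (hAL : A ⊆ L) (hA : A.Nontrivial) :
    ∃ F : Set E, (∀ e ∈ F, G.src e ∈ L ∧ G.tgt e ∈ L) ∧ G.ConnectedOn L (· ∉ F) ∧
      ∃ a ∈ A, ∃ b ∈ A, a ≠ b ∧ G.Reaches (· ∈ F) a b ∧
        ∀ e ∈ F, G.Reaches (· ∈ F) a (G.src e) := by
  have hL : G.ConnectedOn L fun _ => True := connectedOn_of_between_nonempty fun X hX hne hXL =>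
    Set.nonempty_of_ncard_ne_zero (Nat.ne_zero_of_lt (htwo X hX hne hXL))
  obtain ⟨a₀, ha₀, b₀, hb₀, hne₀⟩ := hA
  have hempty : G.IsReserve L A z ∅ := by
    refine ⟨by simp, by simp, a₀, ha₀, b₀, hb₀, hne₀, ?_⟩
    exact (hL a₀ (hAL ha₀) b₀ (hAL hb₀)).mono fun e he => ⟨Set.notMem_empty e, he.2⟩
  obtain ⟨T, hT⟩ := (Set.toFinite {T | G.IsReserve L A z T}).exists_maximal ⟨∅, hempty⟩
  have hspan : ∀ w ∈ L, G.Reaches (· ∈ T) z w := by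
    intro w hw
    by_contra hzw
    obtain ⟨f, hfT, hf⟩ := hT.prop.exists_insert hz htwo hthree hw hzw
    exact hfT (hT.le_of_ge hf (Set.subset_insert f T) (Set.mem_insert f T))
  obtain ⟨a, ha, b, hb, hab, hreach⟩ := hT.prop.joined
  set P : E → Prop := fun e => e ∉ T ∧ G.src e ∈ L ∧ G.tgt e ∈ L
  refine ⟨{e | P e ∧ G.Reaches P a (G.src e)}, fun e he => he.1.2, fun u hu v hv => ?_,
    a, ha, b, hb, hab, hreach.and_reaches_src, fun e he => he.2.and_reaches_src⟩
  exact ((hspan u hu).symm.trans (hspan v hv)).mono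
    fun e he => ⟨fun heF => heF.1.1 he, hT.prop.inside e he⟩

end Reserve

section MinimalEnd

variable {V E : Type} {G : Multigraph V E} {U W X Y L M : Set V}

theorem cutEdges_subset_between (hX : ∀ e, ∀ x ∈ X, ∀ y ∉ L, ¬ G.IsLink e x y) :
    G.cutEdges X ⊆ G.between X (L \ X) := by
  intro e he
  rw [cutEdges_eq_between, mem_between_iff] at he
  obtain ⟨x, hx, y, hy, hlink⟩ := he
  exact hlink.mem_between hx ⟨by_contra fun hyL => hX e x hx y hyL hlink, hy⟩

theorem disjoint_between (hXY : Disjoint X Y) (hXM : Disjoint X M) :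
    Disjoint (G.between X M) (G.between Y M) := by
  rw [Set.disjoint_left] at *
  rintro e (⟨hsrc, -⟩ | ⟨-, htgt⟩) (⟨hsrc', htgt'⟩ | ⟨hsrc', htgt'⟩)
  exacts [hXY hsrc hsrc', hXM hsrc hsrc', hXM htgt htgt', hXY htgt htgt']

variable [Finite E]

theorem ncard_between_add_ncard_between_le (hXY : Disjoint X Y) (hXM : Disjoint X M) :
    (G.between X (Y ∪ M)).ncard + (G.between Y (X ∪ M)).ncard ≤
      (G.between (X ∪ Y) M).ncard + 2 * (G.between X Y).ncard := by
  have hunion : (G.between (X ∪ Y) M).ncard = (G.between X M).ncard + (G.between Y M).ncard := by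
    rw [between_comm, between_union_right, between_comm G M, between_comm G M]
    exact Set.ncard_union_eq (disjoint_between hXY hXM)
  have hX := Set.ncard_union_le (G.between X Y) (G.between X M)
  have hY := Set.ncard_union_le (G.between X Y) (G.between Y M)
  rw [between_union_right, between_union_right, between_comm G Y X]
  omega

theorem exists_minimal_end [Finite V] (G : Multigraph V E) (hW : W.Nonempty) :
    ∃ L ⊆ W, L.Nonempty ∧ (G.between L (W \ L)).ncard ≤ 1 ∧
      ∀ X ⊆ L, X.Nonempty → X ≠ L → 2 ≤ (G.between X (L \ X)).ncard := by
  let IsEnd : Set V → Prop := fun L => L ⊆ W ∧ L.Nonempty ∧ (G.between L (W \ L)).ncard ≤ 1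
  obtain ⟨L, hL⟩ := (Set.toFinite {L | IsEnd L}).exists_minimal
    ⟨W, subset_rfl, hW, by simp [between]⟩
  obtain ⟨hLW, hLne, hL1⟩ := hL.prop
  have hlarge : ∀ X ⊂ L, X.Nonempty → 2 ≤ (G.between X (W \ X)).ncard := by
    intro X hXL hX
    by_contra! hlt
    exact hXL.2 (hL.le_of_le ⟨hXL.1.trans hLW, hX, Nat.le_of_lt_succ hlt⟩ hXL.1)
  refine ⟨L, hLW, hLne, hL1, fun X hXL hX hne => ?_⟩
  have hXss : X ⊂ L := hXL.ssubset_of_ne hne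
  have hsum := ncard_between_add_ncard_between_le (G := G)
    (Set.disjoint_sdiff_right : Disjoint X (L \ X))
    (Set.disjoint_sdiff_right.mono_left hXL : Disjoint X (W \ L))
  have hX2 := hlarge X hXss hX
  have hY2 := hlarge (L \ X) (sdiff_lt hXL hX.ne_empty) (Set.nonempty_of_ssubset hXss)
  rw [Set.union_sdiff_cancel hXL] at hsum
  rw [show W \ X = L \ X ∪ W \ L by grind] at hX2
  rw [show W \ (L \ X) = X ∪ W \ L by grind] at hY2
  omega

theorem exists_forall_isLink_eq (hL : L.Nonempty) (hLM : Disjoint L M)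
    (h : (G.between L M).ncard ≤ 1) :
    ∃ z ∈ L, ∀ e, ∀ x ∈ L, ∀ y ∈ M, G.IsLink e x y → x = z := by
  obtain hempty | ⟨f, hf⟩ := (G.between L M).eq_empty_or_nonempty
  · obtain ⟨z, hz⟩ := hL
    exact ⟨z, hz, fun e x hx y hy hlink =>
      absurd (hlink.mem_between hx hy) (hempty ▸ Set.notMem_empty e)⟩
  · obtain ⟨z, hz, _, -, hf'⟩ := mem_between_iff.mp hf
    refine ⟨z, hz, fun e x hx y hy hlink => ?_⟩
    obtain rfl : e = f := (Set.ncard_le_one (Set.toFinite _)).mp h _ (hlink.mem_between hx hy) _ hf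
    exact hlink.left_unique_of_mem hf' hz (hLM.notMem_of_mem_right hy)

end MinimalEnd

section Ears

variable {V E : Type} {G : Multigraph V E} {U L : Set V} {F : Set E} {a z : V}

/-- A nonseparating ear of `U`: a connected set `F` of edges, or just the vertex `a` if `F` is
empty, that is attached to `U` by two different edges, and whose deletion does not disconnect
the ends of its edges outside `U`. -/
structure IsEar (G : Multigraph V E) (U : Set V) (a : V) (F : Set E) : Prop where
  notMem : a ∉ U
  attached : ∃ u ∈ U, ∃ u' ∈ U, ∃ b g g', g ≠ g' ∧ G.IsLink g u a ∧ G.IsLink g' u' b ∧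
    G.Reaches (· ∈ F) a b
  reaches : ∀ e ∈ F, G.Reaches (· ∈ F) a (G.src e)
  bypass : ∀ e ∈ F, G.Reaches (fun e => e ∉ F ∧ G.src e ∉ U ∧ G.tgt e ∉ U) (G.src e) (G.tgt e)

variable [Finite E]

theorem EdgeConnected.exists_isEar_of_end (hG : G.EdgeConnected 3) (hU : U.Nonempty)
    (hLU : Disjoint L U) (hz : z ∈ L) (hzL : ∀ e, ∀ x ∈ L, ∀ y ∈ Uᶜ \ L, G.IsLink e x y → x = z)
    (htwo : ∀ X ⊆ L, X.Nonempty → X ≠ L → 2 ≤ (G.between X (L \ X)).ncard)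
    (hA : {x ∈ L | ∃ u ∈ U, ∃ g, G.IsLink g u x}.Nontrivial) : ∃ a F, G.IsEar U a F := by
  set A : Set V := {x ∈ L | ∃ u ∈ U, ∃ g, G.IsLink g u x}
  have hthree : ∀ X ⊆ L, X.Nonempty → z ∉ X → Disjoint X A →
      3 ≤ (G.between X (L \ X)).ncard := by
    rintro X hXL ⟨x, hx⟩ hzX hXA
    obtain ⟨u, hu⟩ := hU
    refine (hG.le_ncard_cutEdges hx fun huX => hLU.notMem_of_mem_right hu (hXL huX)).trans
      (Set.ncard_le_ncard (cutEdges_subset_between ?_) (Set.toFinite _))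
    intro e x hx y hyL hlink
    by_cases hyU : y ∈ U
    · exact Set.disjoint_left.mp hXA hx ⟨hXL hx, y, hyU, e, hlink.symm⟩
    · exact hzX (hzL e x (hXL hx) y ⟨hyU, hyL⟩ hlink ▸ hx)
  obtain ⟨F, hFL, hLF, a, ⟨haL, u, hu, g, hg⟩, b, ⟨hbL, u', hu', g', hg'⟩, hab, hreach, hF⟩ :=
    exists_connectedOn_and_reaches hz htwo hthree (Set.sep_subset _ _) hA
  refine ⟨a, F, hLU.notMem_of_mem_left haL, ⟨u, hu, u', hu', b, g, g', ?_, hg, hg', hreach⟩, hF,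
    fun e he => (hLF _ (hFL e he).1 _ (hFL e he).2).mono fun e' he' =>
      ⟨he'.1, hLU.notMem_of_mem_left he'.2.1, hLU.notMem_of_mem_left he'.2.2⟩⟩
  rintro rfl
  exact hab (hg.symm.left_unique_of_mem hg'.symm hbL (hLU.notMem_of_mem_right hu))

theorem EdgeConnected.exists_isEar [Finite V] (hG : G.EdgeConnected 3) (hU : U.Nonempty)
    (hU' : U ≠ Set.univ) : ∃ a F, G.IsEar U a F := by
  obtain ⟨L, hLU, hL, hL1, htwo⟩ := exists_minimal_end G (Set.nonempty_compl.mpr hU')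
  rw [Set.subset_compl_iff_disjoint_right] at hLU
  obtain ⟨z, hz, hzL⟩ := exists_forall_isLink_eq hL Set.disjoint_sdiff_right hL1
  have hLU2 : 1 < (G.between L U).ncard := by
    obtain ⟨u, hu⟩ := hU
    have hcut := hG.le_ncard_cutEdges hz (hLU.notMem_of_mem_right hu)
    rw [cutEdges_eq_between, show Lᶜ = U ∪ Uᶜ \ L by grind, between_union_right] at hcut
    have := Set.ncard_union_le (G.between L U) (G.between L (Uᶜ \ L))
    omega
  obtain ⟨g, hg, g', hg', hne⟩ := (Set.one_lt_ncard (Set.toFinite _)).mp hLU2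
  obtain ⟨a, ha, u, hu, hlink⟩ := mem_between_iff.mp hg
  obtain ⟨b, hb, u', hu', hlink'⟩ := mem_between_iff.mp hg'
  obtain rfl | hab := eq_or_ne a b
  · exact ⟨a, ∅, hLU.notMem_of_mem_left ha,
      ⟨u, hu, u', hu', a, g, g', hne, hlink.symm, hlink'.symm, Reaches.refl a⟩, by simp, by simp⟩
  · exact hG.exists_isEar_of_end hU hLU hz hzL htwo
      ⟨a, ⟨ha, u, hu, g, hlink.symm⟩, b, ⟨hb, u', hu', g', hlink'.symm⟩, hab⟩

end Ears

section Stages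

variable {V E : Type} {G : Multigraph V E} {k : ℕ} {U : Set V} {R S S' F H : Set E}
  {a u u' x x' : V} {g h : E}

theorem kClosure_mono (G : Multigraph V E) (k : ℕ) (hSS' : S ⊆ S') :
    G.kClosure k S ⊆ G.kClosure k S' :=
  Set.sInter_subset_sInter fun _ hR => ⟨hSS'.trans hR.1, hR.2⟩

/-- A stage of the construction of a peripheral `2`-base, finished once `U` is everything. -/
structure IsStage (G : Multigraph V E) (U : Set V) (S : Set E) : Prop where
  nonempty : U.Nonempty
  ends_mem : ∀ e ∈ S, G.src e ∈ U ∧ G.tgt e ∈ U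
  peripheral : G.Peripheral S
  reaches : ∀ u ∈ U, ∀ v ∈ U, G.Reaches (· ∈ G.kClosure 2 S) u v

theorem IsStage.peripheral_union (hS : G.IsStage U S) (hF : G.IsEar U a F) :
    G.Peripheral (S ∪ F) := by
  refine ⟨hS.peripheral.1, fun v w =>
    (hS.peripheral.2 v w).of_forall_reaches fun e x y he hlink => ?_⟩
  by_cases heF : e ∈ F
  · have hbypass : G.Reaches (· ∉ S ∪ F) (G.src e) (G.tgt e) := (hF.bypass e heF).mono
      fun e' he' hmem => hmem.elim (fun heS => he'.2.1 (hS.ends_mem e' heS).1) he'.1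
    exact hlink.reaches_ends_iff.mp hbypass
  · exact hlink.reaches fun hmem => hmem.elim he heF

variable [Finite E]

theorem Closed.mem_of_reaches (hR : G.Closed k R) (hH : H.ncard < k) (hgH : g ∉ H)
    (hreach : G.Reaches (· ∈ R ∪ H) (G.src g) (G.tgt g)) : g ∈ R := by
  by_contra hg
  obtain ⟨C, hC, hgC, hCRH⟩ :=
    exists_isCycle_of_reaches (fun hmem : g ∈ R ∪ H => hmem.elim hg hgH) hreach
  have hsub : C \ R ⊆ insert g H := by
    rintro e ⟨heC, heR⟩
    exact (hCRH e heC).imp_right fun hmem => hmem.resolve_left heR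
  have hlarge := hR C hC ⟨g, hgC, hg⟩
  have hle := Set.ncard_le_ncard hsub (Set.toFinite _)
  have := Set.ncard_insert_le g H
  omega

theorem Closed.reaches_of_pair (hR : G.Closed 2 R) (hne : g ≠ h) (hg : G.IsLink g u x)
    (hh : G.IsLink h u' x') (hu : G.Reaches (· ∈ R) u u') (hx : G.Reaches (· ∈ R) x x') :
    G.Reaches (· ∈ R) u x := by
  refine hg.reaches (hR.mem_of_reaches (H := {h}) (by simp) hne (hg.reaches_ends_iff.mpr ?_))
  exact (hu.mono fun _ => Or.inl).trans
    ((hh.reaches (Or.inr rfl)).trans (hx.symm.mono fun _ => Or.inl))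

theorem IsStage.union_ear (hS : G.IsStage U S) (hF : G.IsEar U a F) :
    G.IsStage (U ∪ {v | G.Reaches (· ∈ F) a v}) (S ∪ F) where
  nonempty := hS.nonempty.mono Set.subset_union_left
  ends_mem e he := by
    refine he.elim (fun heS => ⟨Or.inl (hS.ends_mem e heS).1, Or.inl (hS.ends_mem e heS).2⟩)
      fun heF => ⟨Or.inr (hF.reaches e heF), Or.inr ?_⟩
    exact (hF.reaches e heF).trans ((G.isLink_src_tgt e).reaches heF)
  peripheral := hS.peripheral_union hF
  reaches := by
    have hclosed := G.closed_kClosure 2 (S ∪ F)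
    obtain ⟨u, hu, u', hu', b, g, g', hne, hg, hg', hab⟩ := hF.attached
    have hUR : ∀ v ∈ U, G.Reaches (· ∈ G.kClosure 2 (S ∪ F)) u v := fun v hv =>
      (hS.reaches u hu v hv).mono (G.kClosure_mono 2 Set.subset_union_left)
    have hFR : ∀ v, G.Reaches (· ∈ F) a v → G.Reaches (· ∈ G.kClosure 2 (S ∪ F)) a v :=
      fun v hv => hv.mono fun e he => G.subset_kClosure 2 _ (Or.inr he)
    have hua := hclosed.reaches_of_pair hne hg hg' (hUR u' hu') (hFR b hab)
    have hall : ∀ v ∈ U ∪ {v | G.Reaches (· ∈ F) a v},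
        G.Reaches (· ∈ G.kClosure 2 (S ∪ F)) u v :=
      fun v hv => hv.elim (hUR v) fun hv => hua.trans (hFR v hv)
    exact fun v hv w hw => (hall v hv).symm.trans (hall w hw)

theorem IsStage.isBase (hS : G.IsStage Set.univ S) : G.IsBase 2 S :=
  Set.eq_univ_of_forall fun e => (G.closed_kClosure 2 S).mem_of_reaches (H := ∅) (by simp)
    (Set.notMem_empty e) ((hS.reaches _ trivial _ trivial).mono fun _ => Or.inl)

theorem EdgeConnected.exists_peripheral_isBase [Finite V] (hG : G.EdgeConnected 3) :
    ∃ S, G.Peripheral S ∧ G.IsBase 2 S := by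
  have hconn : G.Peripheral ∅ := hG ∅ (by simp)
  obtain ⟨r⟩ := hconn.1
  have hstart : G.IsStage {r} ∅ := by
    refine ⟨Set.singleton_nonempty r, by simp, hconn, ?_⟩
    rintro u rfl v rfl
    exact Reaches.refl _
  obtain ⟨U, hU⟩ := (Set.toFinite {U | ∃ S, G.IsStage U S}).exists_maximal ⟨{r}, ∅, hstart⟩
  obtain ⟨S, hS⟩ := hU.prop
  obtain rfl : U = Set.univ := by
    by_contra hne
    obtain ⟨a, F, hF⟩ := hG.exists_isEar hS.nonempty hne
    have hle := hU.le_of_ge ⟨S ∪ F, hS.union_ear hF⟩ Set.subset_union_left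
    exact hF.notMem (hle (Or.inr (Reaches.refl a)))
  exact ⟨S, hS.peripheral, hS.isBase⟩

end Stages

end Multigraph

theorem half_mul_zpow_le_of_pow_le {m d N : ℕ} (hm : 1 ≤ m) (h : m ^ d ≤ 2 ^ d * N) :
    (1 / 2 : ℝ) * ((m : ℝ) / 2) ^ ((d : ℤ) - 1) ≤ N := by
  have hm' : (1 : ℝ) ≤ m := by exact_mod_cast hm
  have hpos : (0 : ℝ) < (m : ℝ) / 2 := by positivity
  calc (1 / 2 : ℝ) * ((m : ℝ) / 2) ^ ((d : ℤ) - 1)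
      ≤ ((m : ℝ) / 2) * ((m : ℝ) / 2) ^ ((d : ℤ) - 1) := by gcongr
    _ = ((m : ℝ) / 2) ^ d := by rw [zpow_sub_one₀ hpos.ne', zpow_natCast]; field_simp
    _ ≤ N := by
      rw [div_pow, div_le_iff₀ (by positivity), mul_comm]
      exact_mod_cast h

theorem exists_ne_zero_forall_card_le_two {A : Type} [AddCommGroup A] [Fintype A]
    (hA : Even (Fintype.card A)) :
    ∃ c : A, c ≠ 0 ∧ ∀ a : A, ({a, a + c, a - c} : Finset A).card ≤ 2 := by
  have := Fact.mk Nat.prime_two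
  obtain ⟨c, hc⟩ := exists_prime_addOrderOf_dvd_card (G := A) 2 hA.two_dvd
  have hc0 : c ≠ 0 := by
    rintro rfl
    simp at hc
  have hneg : -c = c := by
    rw [neg_eq_iff_add_eq_zero, ← two_nsmul, ← hc, addOrderOf_nsmul_eq_zero]
  refine ⟨c, hc0, fun a => ?_⟩
  rw [sub_eq_add_neg, hneg, Finset.pair_eq_singleton]
  exact Finset.card_le_two

theorem Multigraph.EdgeConnected.half_mul_zpow_le_card_flows_avoiding {V E A : Type} [Fintype V]
    [Fintype E] [AddCommGroup A] [Fintype A] {G : Multigraph V E} (hG : G.EdgeConnected 3) {c : A}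
    (hc : c ≠ 0) {q : ℕ} (hq : ∀ a : A, ({a, a + c, a - c} : Finset A).card ≤ q)
    (hqA : 2 * q < Fintype.card A) (f : E → A) :
    (1 / 2 : ℝ) * (((Fintype.card A : ℝ) - 2 * q) / 2) ^
        ((Fintype.card E : ℤ) - Fintype.card V) ≤
      Nat.card {φ : E → A // G.IsFlow φ ∧ ∀ e : E, φ e ≠ f e} := by
  obtain ⟨S, hper, hS⟩ := hG.exists_peripheral_isBase
  have hVE := hper.connected.card_le_card_add_one
  have hcount := half_mul_zpow_le_of_pow_le (Nat.sub_pos_of_lt hqA)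
    (hS.pow_le_two_pow_mul_card hper f hc hq)
  rw [Nat.cast_sub hqA.le, Nat.cast_sub hVE] at hcount
  convert hcount using 3
  · push_cast
    rfl
  · push_cast
    ring

/-- For a 3-edge-connected oriented graph with `ℓ = |E| - |V|` and an abelian group `Γ`
of order `k ≥ 6`, for every `f : E → Γ` there are at least `(1/2)((k-6)/2)^ℓ` flows
avoiding `f` when `k` is odd, and at least `(1/2)((k-4)/2)^ℓ` such flows when `k` is even. -/
theorem many_group_connectivity_flows_large_groups {V E Γ : Type} [Fintype V] [Fintype E]
    [Fintype Γ] [AddCommGroup Γ] (G : Multigraph V E) (hG : G.EdgeConnected 3)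
    (k : ℕ) (hk : Fintype.card Γ = k) (hk6 : 6 ≤ k)
    (ℓ : ℤ) (hℓ : ℓ = (Fintype.card E : ℤ) - (Fintype.card V : ℤ))
    (f : E → Γ) :
    (Odd k →
      (1 / 2 : ℝ) * (((k : ℝ) - 6) / 2) ^ ℓ ≤
        Nat.card {φ : E → Γ // G.IsFlow φ ∧ ∀ e : E, φ e ≠ f e}) ∧
    (Even k →
      (1 / 2 : ℝ) * (((k : ℝ) - 4) / 2) ^ ℓ ≤
        Nat.card {φ : E → Γ // G.IsFlow φ ∧ ∀ e : E, φ e ≠ f e}) := by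
  subst hk hℓ
  constructor
  · intro hodd
    have : Nontrivial Γ := Fintype.one_lt_card_iff_nontrivial.mp (by omega)
    obtain ⟨c, hc⟩ := exists_ne (0 : Γ)
    have hk7 : 2 * 3 < Fintype.card Γ := by
      obtain ⟨j, hj⟩ := hodd
      omega
    have hcount := hG.half_mul_zpow_le_card_flows_avoiding hc (fun _ => Finset.card_le_three) hk7 f
    convert hcount using 4
    norm_num
  · intro heven
    obtain ⟨c, hc, htwo⟩ := exists_ne_zero_forall_card_le_two heven
    have hcount := hG.half_mul_zpow_le_card_flows_avoiding hc htwo (by omega) f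
    convert hcount using 4
    norm_num
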